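/- Grigorchuk wreath recursions: as permutations of List Bool, (a * b)^2 = pair (c * a) (a * c) and (a * b * a * d)^2 = pair 1 ((a * b)^2). -/

import Mathlib

namespace Grigorchuk

/-- Underlying map of the Grigorchuk generator `a`: flip the first letter. -/
def aF : List Bool → List Bool
  | [] => []
  | x :: w => (!x) :: w

mutual
  /-- Underlying map of the Grigorchuk generator `b`. -/
  def bF : List Bool → List Bool
    | [] => []
    | false :: w => false :: aF w
    | true :: w => true :: cF w
  /-- Underlying map of the Grigorchuk generator `c`. -/
  def cF : List Bool → List Bool
    | [] => []
    | false :: w => false :: aF w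
    | true :: w => true :: dF w
  /-- Underlying map of the Grigorchuk generator `d`. -/
  def dF : List Bool → List Bool
    | [] => []
    | false :: w => false :: w
    | true :: w => true :: bF w
end

theorem aF_aF : ∀ w : List Bool, aF (aF w) = w := by
  intro w
  cases w with
  | nil => rfl
  | cons x w => simp [aF]

theorem bcd_invol : ∀ w : List Bool,
    bF (bF w) = w ∧ cF (cF w) = w ∧ dF (dF w) = w := by
  intro w
  induction w with
  | nil => simp [bF, cF, dF]
  | cons x w ih =>
    cases x <;> simp [bF, cF, dF, aF_aF, ih.1, ih.2.1, ih.2.2]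

/-- The Grigorchuk generator `a` as a permutation of `List Bool`. -/
def a : Equiv.Perm (List Bool) := ⟨aF, aF, aF_aF, aF_aF⟩

/-- The Grigorchuk generator `b` as a permutation of `List Bool`. -/
def b : Equiv.Perm (List Bool) :=
  ⟨bF, bF, fun w => (bcd_invol w).1, fun w => (bcd_invol w).1⟩

/-- The Grigorchuk generator `c` as a permutation of `List Bool`. -/
def c : Equiv.Perm (List Bool) :=
  ⟨cF, cF, fun w => (bcd_invol w).2.1, fun w => (bcd_invol w).2.1⟩

/-- The Grigorchuk generator `d` as a permutation of `List Bool`. -/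
def d : Equiv.Perm (List Bool) :=
  ⟨dF, dF, fun w => (bcd_invol w).2.2, fun w => (bcd_invol w).2.2⟩

/-- Underlying map of the pair `(g, h)` acting on the two subtrees. -/
def pairF (g h : List Bool → List Bool) : List Bool → List Bool
  | [] => []
  | false :: w => false :: g w
  | true :: w => true :: h w

/-- The permutation of `List Bool` acting as `g` on the subtree below `false`
and as `h` on the subtree below `true`, fixing the root. -/
def pair (g h : Equiv.Perm (List Bool)) : Equiv.Perm (List Bool) :=
  ⟨pairF g h, pairF g.symm h.symm,
    fun w => by cases w with
      | nil => rfl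
      | cons x w => cases x <;> simp [pairF],
    fun w => by cases w with
      | nil => rfl
      | cons x w => cases x <;> simp [pairF]⟩

/-- The first Grigorchuk group: the subgroup of `Equiv.Perm (List Bool)`
generated by `a`, `b`, `c`, `d`. -/
def Γ : Subgroup (Equiv.Perm (List Bool)) := Subgroup.closure {a, b, c, d}

/-- The normal closure in `Γ` of the element `(a * b)^2`, realized as the subgroup
of `Equiv.Perm (List Bool)` generated by all `Γ`-conjugates of `(a * b)^2`. -/
def K : Subgroup (Equiv.Perm (List Bool)) :=
  Subgroup.closure {g | ∃ x ∈ Γ, g = x * (a * b) ^ 2 * x⁻¹}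

end Grigorchuk

namespace Grigorchuk

theorem pair_mul_pair (g h g' h' : Equiv.Perm (List Bool)) :
    pair g h * pair g' h' = pair (g * g') (h * h') := by
  ext1 w
  rcases w with _ | ⟨_ | _, w⟩ <;> rfl

theorem a_mul_pair_mul_a (g h : Equiv.Perm (List Bool)) :
    a * pair g h * a = pair h g := by
  ext1 w
  rcases w with _ | ⟨_ | _, w⟩ <;> rfl

theorem b_eq_pair : b = pair a c := by
  ext1 w
  rcases w with _ | ⟨_ | _, w⟩ <;> simp only [b, a, c, pair, Equiv.coe_fn_mk, bF, pairF]

theorem d_eq_pair : d = pair 1 b := by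
  ext1 w
  rcases w with _ | ⟨_ | _, w⟩ <;>
    simp only [d, b, pair, Equiv.coe_fn_mk, dF, pairF, Equiv.Perm.one_apply]

theorem c_mul_self : c * c = 1 :=
  Equiv.ext fun w => (bcd_invol w).2.1

theorem a_mul_b_mul_a : a * b * a = pair c a := by
  rw [b_eq_pair, a_mul_pair_mul_a]

theorem a_mul_b_mul_a_mul_d : a * b * a * d = pair c (a * b) := by
  rw [a_mul_b_mul_a, d_eq_pair, pair_mul_pair, mul_one]

end Grigorchuk

open Grigorchuk in
/-- Grigorchuk wreath recursions: `(ab)² = (ca, ac)` and `(abad)² = (1, (ab)²)`. -/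
theorem grigorchuk_wreath_recursions :
    (a * b) ^ 2 = pair (c * a) (a * c) ∧
      (a * b * a * d) ^ 2 = pair 1 ((a * b) ^ 2) := by
  constructor
  · calc
      (a * b) ^ 2 = a * b * a * b := by rw [sq, ← mul_assoc]
      _ = pair c a * pair a c := by rw [a_mul_b_mul_a, b_eq_pair]
      _ = pair (c * a) (a * c) := pair_mul_pair c a a c
  · calc
      (a * b * a * d) ^ 2 = pair (c * c) (a * b * (a * b)) := by
        rw [a_mul_b_mul_a_mul_d, sq, pair_mul_pair]
      _ = pair 1 ((a * b) ^ 2) := by rw [c_mul_self, sq]
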